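/- Let (G, G⁺, Δ) be a support-preserving LCM-Garside structure satisfying homogeneity and square-freeness, and such that for every saturated X ⊆ 𝒜 some positive power of Δ_X is central in G_X. Then for any two parabolic subgroups B₁ and B₂ of G, the intersection B₁ ∩ B₂ is again a parabolic subgroup of G. -/

import Mathlib

open scoped Pointwise Classical

/-- A Garside structure on a group `G`: a submonoid `pos` of positive elements with
trivial units, prefix and suffix lattice operations, and a Garside element `delta`. -/
structure GarsideStructure (G : Type*) [Group G] where
  /-- the submonoid of positive elements -/
  pos : Submonoid G
  /-- the Garside element Δ -/
  delta : G
  /-- meet for the prefix order -/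
  meet : G → G → G
  /-- join for the prefix order -/
  join : G → G → G
  /-- meet for the suffix order -/
  rmeet : G → G → G
  /-- join for the suffix order -/
  rjoin : G → G → G
  units_triv : ∀ a : G, a ∈ pos → a⁻¹ ∈ pos → a = 1
  meet_le_left : ∀ a b : G, (meet a b)⁻¹ * a ∈ pos
  meet_le_right : ∀ a b : G, (meet a b)⁻¹ * b ∈ pos
  le_meet : ∀ a b c : G, c⁻¹ * a ∈ pos → c⁻¹ * b ∈ pos → c⁻¹ * meet a b ∈ pos
  le_join_left : ∀ a b : G, a⁻¹ * join a b ∈ pos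
  le_join_right : ∀ a b : G, b⁻¹ * join a b ∈ pos
  join_le : ∀ a b c : G, a⁻¹ * c ∈ pos → b⁻¹ * c ∈ pos → (join a b)⁻¹ * c ∈ pos
  rmeet_le_left : ∀ a b : G, a * (rmeet a b)⁻¹ ∈ pos
  rmeet_le_right : ∀ a b : G, b * (rmeet a b)⁻¹ ∈ pos
  le_rmeet : ∀ a b c : G, a * c⁻¹ ∈ pos → b * c⁻¹ ∈ pos → rmeet a b * c⁻¹ ∈ pos
  rjoin_le_left : ∀ a b : G, rjoin a b * a⁻¹ ∈ pos
  rjoin_le_right : ∀ a b : G, rjoin a b * b⁻¹ ∈ pos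
  rjoin_le : ∀ a b c : G, c * a⁻¹ ∈ pos → c * b⁻¹ ∈ pos → c * (rjoin a b)⁻¹ ∈ pos
  delta_pos : delta ∈ pos
  /-- Δ is balanced: its positive prefixes coincide with its positive suffixes -/
  delta_balanced : ∀ s : G, s ∈ pos → (s⁻¹ * delta ∈ pos ↔ delta * s⁻¹ ∈ pos)
  /-- the set of simple elements (divisors of Δ) is finite -/
  divDelta_finite : {s : G | s ∈ pos ∧ s⁻¹ * delta ∈ pos}.Finite
  /-- the simple elements generate `G` -/
  divDelta_generates : Subgroup.closure {s : G | s ∈ pos ∧ s⁻¹ * delta ∈ pos} = ⊤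
  /-- the atoms generate the positive monoid -/
  atoms_generate :
    Submonoid.closure {a : G | a ∈ pos ∧ a ≠ 1 ∧
      ∀ b ∈ pos, b⁻¹ * a ∈ pos → b = 1 ∨ b = a} = pos
  /-- every atom divides Δ -/
  atoms_divide_delta : ∀ a : G, a ∈ pos → a ≠ 1 →
    (∀ b ∈ pos, b⁻¹ * a ∈ pos → b = 1 ∨ b = a) → a⁻¹ * delta ∈ pos
  /-- every element is bounded below and above by powers of Δ -/
  delta_bounds : ∀ x : G, ∃ p q : ℤ, p ≤ q ∧ (delta ^ p)⁻¹ * x ∈ pos ∧ x⁻¹ * delta ^ q ∈ pos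
  /-- conjugation by Δ maps the positive monoid bijectively onto itself -/
  conj_delta : ∀ a : G, a ∈ pos ↔ delta * a * delta⁻¹ ∈ pos
  /-- some positive power of Δ is central -/
  central_power : ∃ n : ℕ, 0 < n ∧ delta ^ n ∈ Subgroup.center G
  /-- no infinite strictly decreasing (for the prefix order) sequence of positive elements -/
  no_infinite_descent : ¬ ∃ f : ℕ → G, (∀ n, f n ∈ pos) ∧
    ∀ n, (f (n + 1))⁻¹ * f n ∈ pos ∧ f (n + 1) ≠ f n

namespace GarsideStructure

variable {G : Type*} [Group G] (S : GarsideStructure G)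

/-- the prefix order: `a ≼ b` iff `a⁻¹ * b` is positive -/
def le (a b : G) : Prop := a⁻¹ * b ∈ S.pos

/-- the set of positive prefixes of an element -/
def Div (d : G) : Set G := {s : G | s ∈ S.pos ∧ S.le s d}

/-- atoms: nontrivial positive elements with no nontrivial proper positive prefix -/
def IsAtomic (a : G) : Prop :=
  a ∈ S.pos ∧ a ≠ 1 ∧ ∀ b ∈ S.pos, S.le b a → b = 1 ∨ b = a

/-- the set of atoms -/
def atoms : Set G := {a : G | S.IsAtomic a}

/-- the left denominator of `x`: `D_L x = (1 ∧ x)⁻¹` -/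
def DL (x : G) : G := (S.meet 1 x)⁻¹

/-- the left numerator of `x`: `N_L x = D_L x * x` -/
def NL (x : G) : G := S.DL x * x

/-- the (left) swap `φ(x) = N_L x * (D_L x)⁻¹ = D_L x * x * (D_L x)⁻¹` -/
def swap (x : G) : G := S.DL x * x * (S.DL x)⁻¹

/-- an element is recurrent if it is fixed by some positive iterate of the swap map -/
def Recurrent (x : G) : Prop := ∃ m : ℕ, 0 < m ∧ S.swap^[m] x = x

/-- the set `R(x)` of recurrent conjugates of `x` -/
def Rset (x : G) : Set G := {y : G | IsConj x y ∧ S.Recurrent y}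

/-- the set `C⁺(x)` of positive conjugates of `x` -/
def Cpos (x : G) : Set G := {y : G | IsConj x y ∧ y ∈ S.pos}

/-- the set `C⁻(x)` of negative conjugates of `x` -/
def Cneg (x : G) : Set G := {y : G | IsConj x y ∧ y⁻¹ ∈ S.pos}

/-- the transport of `u` at `y`: with `y = a⁻¹ b` reduced, `u^{(1)} = (a u) ∧ (b u)` -/
def transport (y u : G) : G := S.meet (S.DL y * u) (S.NL y * u)

/-- `Δ_X`: the least upper bound for the prefix order of a set `X` (`1` if there is none) -/
noncomputable def deltaOf (X : Set G) : G :=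
  if h : ∃ d : G, (∀ x ∈ X, S.le x d) ∧ ∀ c : G, (∀ x ∈ X, S.le x c) → S.le d c
  then h.choose else 1

/-- the closure `X̄ = Div(Δ_X) ∩ 𝒜` of a set of atoms -/
noncomputable def closureOf (X : Set G) : Set G := S.Div (S.deltaOf X) ∩ S.atoms

/-- the subgroup `G_X` generated by the closure of `X` -/
noncomputable def GX (X : Set G) : Subgroup G := Subgroup.closure (S.closureOf X)

/-- the support of an element: the closure of the set of atoms appearing in atom
factorizations of its left denominator and left numerator -/
noncomputable def supp (x : G) : Set G :=
  if h : ∃ p : List G × List G,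
      (∀ a ∈ p.1, a ∈ S.atoms) ∧ (∀ a ∈ p.2, a ∈ S.atoms) ∧
      p.1.prod = S.DL x ∧ p.2.prod = S.NL x
  then S.closureOf ({a : G | a ∈ h.choose.1} ∪ {a : G | a ∈ h.choose.2})
  else ∅

/-- an LCM-Garside structure -/
structure IsLCM : Prop where
  delta_eq : S.delta = S.deltaOf S.atoms
  balanced : ∀ X ⊆ S.atoms, ∀ s ∈ S.pos,
    (S.le s (S.deltaOf X) ↔ S.deltaOf X * s⁻¹ ∈ S.pos)
  div_eq : ∀ X ⊆ S.atoms,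
    S.Div (S.deltaOf X) = S.Div S.delta ∩ {g : G | g ∈ S.GX X ∧ g ∈ S.pos}
  factor_closed : ∀ X ⊆ S.atoms, ∀ g : G, g ∈ S.GX X → g ∈ S.pos →
    ∀ a b : G, a ∈ S.pos → b ∈ S.pos → g = a * b → a ∈ S.GX X ∧ b ∈ S.GX X
  lattice_closed : ∀ X ⊆ S.atoms, ∀ a b : G, a ∈ S.GX X → b ∈ S.GX X →
    S.meet a b ∈ S.GX X ∧ S.join a b ∈ S.GX X
  fraction_closed : ∀ X ⊆ S.atoms, ∀ g : G, g ∈ S.GX X →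
    S.DL g ∈ S.GX X ∧ S.NL g ∈ S.GX X

/-- a standard parabolic subgroup: the subgroup generated by a saturated set of atoms -/
noncomputable def IsStandardParabolic (H : Subgroup G) : Prop :=
  ∃ X : Set G, X ⊆ S.atoms ∧ S.closureOf X = X ∧ H = S.GX X

/-- a parabolic subgroup: a conjugate of a standard parabolic subgroup -/
noncomputable def IsParabolic (H : Subgroup G) : Prop :=
  ∃ (P : Subgroup G) (c : G), S.IsStandardParabolic P ∧
    H = Subgroup.map (MulAut.conj c).toMonoidHom P

/-- the structure is support-preserving if conjugations between positive elements
conjugate the corresponding parabolic subgroups of the supports -/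
noncomputable def SupportPreserving : Prop :=
  ∀ y ∈ S.pos, ∀ z ∈ S.pos, ∀ α : G, α⁻¹ * y * α = z →
    Subgroup.map (MulAut.conj α⁻¹).toMonoidHom (S.GX (S.supp y)) = S.GX (S.supp z)

/-- `P` is the parabolic closure of `x` -/
noncomputable def IsParabolicClosure (x : G) (P : Subgroup G) : Prop :=
  S.IsParabolic P ∧ x ∈ P ∧ ∀ H : Subgroup G, S.IsParabolic H → x ∈ H → P ≤ H

end GarsideStructure

namespace GarsideStructure

variable {G : Type*} [Group G] (S : GarsideStructure G)

section Order

theorem le_antisymm {a b : G} (h : a⁻¹ * b ∈ S.pos) (h' : b⁻¹ * a ∈ S.pos) : a = b := by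
  have := S.units_triv _ h (by simpa using h')
  exact inv_mul_eq_one.mp this

theorem le_trans {a b c : G} (h : a⁻¹ * b ∈ S.pos) (h' : b⁻¹ * c ∈ S.pos) :
    a⁻¹ * c ∈ S.pos := by
  have := S.pos.mul_mem h h'
  simpa [mul_assoc] using this

theorem mul_meet (c a b : G) : c * S.meet a b = S.meet (c * a) (c * b) := by
  apply S.le_antisymm
  · apply S.le_meet
    · simpa [mul_assoc] using S.meet_le_left a b
    · simpa [mul_assoc] using S.meet_le_right a b
  · have := S.le_meet a b (c⁻¹ * S.meet (c * a) (c * b))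
      (by simpa [mul_assoc] using S.meet_le_left (c * a) (c * b))
      (by simpa [mul_assoc] using S.meet_le_right (c * a) (c * b))
    simpa [mul_assoc] using this

theorem meet_eq_left {a b : G} (h : a⁻¹ * b ∈ S.pos) : S.meet a b = a :=
  S.le_antisymm (S.meet_le_left a b) (S.le_meet a b a (by simp [S.pos.one_mem]) h)

theorem meet_mem_pos {a b : G} (ha : a ∈ S.pos) (hb : b ∈ S.pos) : S.meet a b ∈ S.pos := by
  simpa using S.le_meet a b 1 (by simpa using ha) (by simpa using hb)

theorem DL_mem_pos (x : G) : S.DL x ∈ S.pos := by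
  simpa [DL] using S.meet_le_left 1 x

theorem NL_mem_pos (x : G) : S.NL x ∈ S.pos := S.meet_le_right 1 x

theorem DL_of_pos {x : G} (hx : x ∈ S.pos) : S.DL x = 1 := by
  simp [DL, S.meet_eq_left (a := 1) (b := x) (by simpa using hx)]

theorem NL_of_pos {x : G} (hx : x ∈ S.pos) : S.NL x = x := by
  simp [NL, S.DL_of_pos hx]

theorem NL_inv_eq_meet (x : G) : (S.NL x)⁻¹ = S.meet x⁻¹ 1 := by
  have := S.mul_meet x⁻¹ 1 x
  simp only [mul_one, inv_mul_cancel] at this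
  simp [NL, DL, this]

theorem mem_pos_of_DL_eq_one {x : G} (h : S.DL x = 1) : x ∈ S.pos := by
  have := S.NL_mem_pos x
  simpa [NL, h] using this

end Order

section Delta

theorem delta_pow_mem (n : ℕ) : S.delta ^ n ∈ S.pos := S.pos.pow_mem S.delta_pos n

theorem conj_delta_pow_mem (n : ℕ) (g : G) :
    S.delta ^ n * g * (S.delta ^ n)⁻¹ ∈ S.pos ↔ g ∈ S.pos := by
  induction n with
  | zero => simp
  | succ n ih =>
    rw [← ih, S.conj_delta (S.delta ^ n * g * (S.delta ^ n)⁻¹), pow_succ']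
    simp [mul_assoc]

theorem delta_pow_mul_mem_iff (n : ℕ) (g : G) :
    S.delta ^ n * g ∈ S.pos ↔ g * S.delta ^ n ∈ S.pos := by
  rw [← S.conj_delta_pow_mem n (g * S.delta ^ n)]
  simp [mul_assoc]

/-- `g` is bounded below by `Δ ^ (-p)` for the prefix order. -/
def BoundedBelow (p : ℕ) (g : G) : Prop := S.delta ^ p * g ∈ S.pos

variable {S}

theorem BoundedBelow.mul {p q : ℕ} {g h : G} (hg : S.BoundedBelow p g)
    (hh : S.BoundedBelow q h) : S.BoundedBelow (p + q) (g * h) := by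
  have := S.pos.mul_mem ((S.conj_delta_pow_mem q _).mpr hg) hh
  unfold BoundedBelow
  rw [add_comm, pow_add]
  simpa [mul_assoc] using this

theorem boundedBelow_of_pos {g : G} (hg : g ∈ S.pos) : S.BoundedBelow 0 g := by
  simpa [BoundedBelow] using hg

theorem BoundedBelow.mono {p q : ℕ} {g : G} (h : S.BoundedBelow p g) (hpq : p ≤ q) :
    S.BoundedBelow q g := by
  obtain ⟨r, rfl⟩ := Nat.exists_eq_add_of_le hpq
  have := S.pos.mul_mem (S.delta_pow_mem r) h
  unfold BoundedBelow
  rw [add_comm, pow_add]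
  simpa [mul_assoc] using this

theorem BoundedBelow.mul_pos {p : ℕ} {g h : G} (hg : S.BoundedBelow p g)
    (hh : h ∈ S.pos) : S.BoundedBelow p (g * h) :=
  hg.mul (boundedBelow_of_pos hh)

theorem BoundedBelow.pos_mul {p : ℕ} {g h : G} (hg : S.BoundedBelow p g)
    (hh : h ∈ S.pos) : S.BoundedBelow p (h * g) := by
  simpa using (boundedBelow_of_pos hh).mul hg

theorem BoundedBelow.pow {p : ℕ} {g : G} (hg : S.BoundedBelow p g) (n : ℕ) :
    S.BoundedBelow (n * p) (g ^ n) := by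
  induction n with
  | zero => simp [BoundedBelow, S.pos.one_mem]
  | succ n ih => rw [pow_succ, Nat.succ_mul]; exact ih.mul hg

variable (S)

theorem exists_boundedBelow (g : G) : ∃ p, S.BoundedBelow p g := by
  obtain ⟨p, -, -, hp, -⟩ := S.delta_bounds g
  refine ⟨p.natAbs, ?_⟩
  have hk : 0 ≤ (p.natAbs : ℤ) + p := by omega
  obtain ⟨k, hk⟩ := Int.eq_ofNat_of_zero_le hk
  have h := S.pos.mul_mem (S.delta_pow_mem k) hp
  rw [← zpow_natCast, ← hk, zpow_add, zpow_natCast] at h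
  simpa only [BoundedBelow, mul_assoc, mul_inv_cancel_left] using h

theorem boundedBelow_DL_inv {p : ℕ} {x : G} (h : S.BoundedBelow p x) :
    S.BoundedBelow p (S.DL x)⁻¹ := by
  have := S.le_meet 1 x (S.delta ^ p)⁻¹ (by simpa using S.delta_pow_mem p) (by simpa [BoundedBelow] using h)
  simpa [BoundedBelow, DL] using this

theorem boundedBelow_NL_inv {q : ℕ} {x : G} (h : S.BoundedBelow q x⁻¹) :
    S.BoundedBelow q (S.NL x)⁻¹ := by
  rw [NL_inv_eq_meet]
  have := S.le_meet x⁻¹ 1 (S.delta ^ q)⁻¹ (by simpa [BoundedBelow] using h)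
    (by simpa using S.delta_pow_mem q)
  simpa [BoundedBelow] using this

theorem swap_eq_NL_mul (x : G) : S.swap x = S.NL x * (S.DL x)⁻¹ := rfl

theorem boundedBelow_swap {p : ℕ} {x : G} (h : S.BoundedBelow p x) :
    S.BoundedBelow p (S.swap x) :=
  (S.boundedBelow_DL_inv h).pos_mul (S.NL_mem_pos x)

theorem boundedBelow_swap_inv {q : ℕ} {x : G} (h : S.BoundedBelow q x⁻¹) :
    S.BoundedBelow q (S.swap x)⁻¹ := by
  rw [swap_eq_NL_mul, mul_inv_rev, inv_inv]
  exact (S.boundedBelow_NL_inv h).pos_mul (S.DL_mem_pos x)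

theorem boundedBelow_iterate_swap {p : ℕ} {x : G} (h : S.BoundedBelow p x) (n : ℕ) :
    S.BoundedBelow p (S.swap^[n] x) := by
  induction n with
  | zero => exact h
  | succ n ih => rw [Function.iterate_succ_apply']; exact S.boundedBelow_swap ih

theorem boundedBelow_iterate_swap_inv {q : ℕ} {x : G} (h : S.BoundedBelow q x⁻¹) (n : ℕ) :
    S.BoundedBelow q (S.swap^[n] x)⁻¹ := by
  induction n with
  | zero => exact h
  | succ n ih => rw [Function.iterate_succ_apply']; exact S.boundedBelow_swap_inv ih

/-- Every element becomes positive after multiplication by a central power of `Δ`. -/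
theorem exists_central_mul_mem_pos (u : G) :
    ∃ z ∈ S.pos, (∀ g, z * g = g * z) ∧ z * u ∈ S.pos := by
  obtain ⟨n, hn, hc⟩ := S.central_power
  obtain ⟨p, hp⟩ := S.exists_boundedBelow u
  refine ⟨S.delta ^ (n * p), S.delta_pow_mem _, fun g => ?_,
    hp.mono (Nat.le_mul_of_pos_left p hn)⟩
  rw [pow_mul]
  exact (Subgroup.mem_center_iff.mp (pow_mem hc p) g).symm

end Delta

section Atoms

theorem atoms_subset_Div_delta : S.atoms ⊆ S.Div S.delta :=
  fun a ha => ⟨ha.1, S.atoms_divide_delta a ha.1 ha.2.1 ha.2.2⟩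

theorem atoms_finite : S.atoms.Finite := S.divDelta_finite.subset S.atoms_subset_Div_delta

theorem closure_atoms : Submonoid.closure S.atoms = S.pos := S.atoms_generate

theorem pos_induction {p : G → Prop} (one : p 1)
    (mul : ∀ a ∈ S.atoms, ∀ g ∈ S.pos, p g → p (a * g)) {g : G} (hg : g ∈ S.pos) : p g := by
  rw [← S.closure_atoms] at hg
  induction hg using Submonoid.closure_induction_left with
  | one => exact one
  | mul_left a ha g hg ih => exact mul a ha g (S.closure_atoms ▸ hg) ih

theorem exists_atom_mul {g : G} (hg : g ∈ S.pos) (h1 : g ≠ 1) :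
    ∃ a ∈ S.atoms, ∃ h ∈ S.pos, g = a * h := by
  refine S.pos_induction (p := fun g => g ≠ 1 → ∃ a ∈ S.atoms, ∃ h ∈ S.pos, g = a * h)
    (fun h => absurd rfl h) (fun a ha g hg _ _ => ⟨a, ha, g, hg, rfl⟩) hg h1

end Atoms

section Length

/-- An additive length on `G` taking the value `1` on every atom. -/
structure IsLength (L : G → ℤ) : Prop where
  map_mul : ∀ x y, L (x * y) = L x + L y
  map_atom : ∀ a ∈ S.atoms, L a = 1

/-- An additive length on the positive monoid extends to the group. -/
theorem exists_isLength (ℓ : G → ℕ)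
    (hmul : ∀ a ∈ S.pos, ∀ b ∈ S.pos, ℓ (a * b) = ℓ a + ℓ b) (hatom : ∀ a ∈ S.atoms, ℓ a = 1) :
    ∃ L, S.IsLength L := by
  choose z hz hcomm hzu using S.exists_central_mul_mem_pos
  have key : ∀ x c, c ∈ S.pos → c * x ∈ S.pos →
      (ℓ (z x * x) : ℤ) - ℓ (z x) = ℓ (c * x) - ℓ c := by
    intro x c hc hcx
    have h1 := hmul _ hc _ (hzu x)
    have h2 := hmul _ (hz x) _ hcx
    rw [← mul_assoc, hcomm x, mul_assoc] at h2
    omega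
  refine ⟨fun x => (ℓ (z x * x) : ℤ) - ℓ (z x), ⟨fun x y => ?_, fun a ha => ?_⟩⟩
  · have e : z x * z y * (x * y) = z x * x * (z y * y) := by
      rw [mul_assoc, ← mul_assoc (z y), hcomm y x]; simp only [mul_assoc]
    have h1 := key (x * y) (z x * z y) (S.pos.mul_mem (hz x) (hz y))
      (e ▸ S.pos.mul_mem (hzu x) (hzu y))
    rw [e, hmul _ (hzu x) _ (hzu y), hmul _ (hz x) _ (hz y)] at h1
    push_cast at h1
    omega
  · have h1 := key a 1 S.pos.one_mem (by simpa using ha.1)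
    have h2 := hmul 1 S.pos.one_mem 1 S.pos.one_mem
    rw [one_mul, hatom a ha] at h1
    rw [one_mul] at h2
    omega

variable {S}
variable {L : G → ℤ}

namespace IsLength

theorem map_one (hL : S.IsLength L) : L 1 = 0 := by
  have := hL.map_mul 1 1
  rw [one_mul] at this
  omega

theorem map_inv (hL : S.IsLength L) (x : G) : L x⁻¹ = -L x := by
  have := hL.map_mul x x⁻¹
  rw [mul_inv_cancel, hL.map_one] at this
  omega

theorem map_pow (hL : S.IsLength L) (x : G) (n : ℕ) : L (x ^ n) = n * L x := by
  induction n with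
  | zero => simp [hL.map_one]
  | succ n ih => rw [pow_succ, hL.map_mul, ih]; push_cast; ring

theorem map_conj (hL : S.IsLength L) (x u : G) : L (u⁻¹ * x * u) = L x := by
  rw [hL.map_mul, hL.map_mul, hL.map_inv]; ring

theorem nonneg (hL : S.IsLength L) {g : G} (hg : g ∈ S.pos) : 0 ≤ L g := by
  refine S.pos_induction (p := fun g => 0 ≤ L g) hL.map_one.ge (fun a ha g _ ih => ?_) hg
  rw [hL.map_mul, hL.map_atom a ha]
  omega

theorem pos_of_ne_one (hL : S.IsLength L) {g : G} (hg : g ∈ S.pos) (h1 : g ≠ 1) : 0 < L g := by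
  obtain ⟨a, ha, h, hh, rfl⟩ := S.exists_atom_mul hg h1
  rw [hL.map_mul, hL.map_atom a ha]
  have := hL.nonneg hh
  omega

theorem eq_of_le (hL : S.IsLength L) {a b : G} (h : a⁻¹ * b ∈ S.pos) (hab : L b ≤ L a) : a = b := by
  by_contra hne
  have := hL.pos_of_ne_one h (by rwa [Ne, inv_mul_eq_one])
  rw [hL.map_mul, hL.map_inv] at this
  omega

theorem le_of_le (hL : S.IsLength L) {a b : G} (h : a⁻¹ * b ∈ S.pos) : L a ≤ L b := by
  have := hL.nonneg h
  rw [hL.map_mul, hL.map_inv] at this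
  omega

theorem finite_pos_le (hL : S.IsLength L) (n : ℕ) : {g : G | g ∈ S.pos ∧ L g ≤ n}.Finite := by
  induction n with
  | zero =>
    refine (Set.finite_singleton (1 : G)).subset fun g hg => ?_
    by_contra h1
    have := hL.pos_of_ne_one hg.1 h1
    have := hg.2
    omega
  | succ n ih =>
    refine ((Set.finite_singleton (1 : G)).union (S.atoms_finite.mul ih)).subset fun g hg => ?_
    by_cases h1 : g = 1
    · exact Or.inl h1
    · obtain ⟨a, ha, h, hh, rfl⟩ := S.exists_atom_mul hg.1 h1
      refine Or.inr (Set.mul_mem_mul ha ⟨hh, ?_⟩)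
      have := hg.2
      rw [hL.map_mul, hL.map_atom a ha] at this
      push_cast at this
      omega

theorem finite_bounded (hL : S.IsLength L) (p q : ℕ) :
    {g : G | S.BoundedBelow p g ∧ S.BoundedBelow q g⁻¹}.Finite := by
  have hfin := hL.finite_pos_le (((p + q : ℕ) : ℤ) * L S.delta).toNat
  refine (hfin.image fun g => (S.delta ^ p)⁻¹ * g).subset fun g hg => ?_
  refine ⟨S.delta ^ p * g, ⟨hg.1, ?_⟩, by simp⟩
  have h1 := hL.nonneg hg.1
  have h2 := hL.nonneg hg.2
  simp only [hL.map_mul, hL.map_pow, hL.map_inv] at h1 h2 ⊢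
  push_cast
  rw [add_mul]
  omega

end IsLength

end Length

section Parabolic

theorem exists_isLUB_insert (c : G) {X : Set G} (hX : X.Finite) :
    ∃ d, (∀ x ∈ insert c X, S.le x d) ∧ ∀ b, (∀ x ∈ insert c X, S.le x b) → S.le d b := by
  induction X, hX using Set.Finite.induction_on with
  | empty => exact ⟨c, by simp [le, S.pos.one_mem], by simp⟩
  | @insert a X _ _ ih =>
    obtain ⟨d, hd, hmin⟩ := ih
    refine ⟨S.join d a, fun x hx => ?_, fun b hb => ?_⟩
    · rw [Set.insert_comm] at hx
      rcases hx with rfl | hx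
      · exact S.le_join_right d x
      · exact S.le_trans (hd x hx) (S.le_join_left d a)
    · refine S.join_le d a b (hmin b fun x hx => hb x ?_) (hb a (by simp))
      rw [Set.insert_comm]
      exact Or.inr hx

theorem deltaOf_spec {X : Set G} (hX : X ⊆ S.atoms) :
    S.deltaOf X ∈ S.pos ∧ (∀ x ∈ X, S.le x (S.deltaOf X)) ∧
      ∀ c ∈ S.pos, (∀ x ∈ X, S.le x c) → S.le (S.deltaOf X) c := by
  rcases X.eq_empty_or_nonempty with rfl | ⟨a, ha⟩
  · have h1 : S.deltaOf ∅ = 1 := by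
      unfold deltaOf
      split_ifs with h
      · have hd := h.choose_spec.2
        refine S.le_antisymm (hd 1 (by simp)) ?_
        have h2 := hd (h.choose * h.choose) (by simp)
        simpa [le] using h2
      · rfl
    simp [h1, le, S.pos.one_mem]
  · have h : ∃ d : G, (∀ x ∈ X, S.le x d) ∧ ∀ c : G, (∀ x ∈ X, S.le x c) → S.le d c := by
      have := S.exists_isLUB_insert a (S.atoms_finite.subset hX)
      rwa [Set.insert_eq_of_mem ha] at this
    have e : S.deltaOf X = h.choose := dif_pos h
    rw [e]
    refine ⟨?_, h.choose_spec.1, fun c _ => h.choose_spec.2 c⟩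
    have := S.pos.mul_mem (hX ha).1 (h.choose_spec.1 a ha)
    simpa using this

variable {S}

theorem closureOf_subset_atoms (X : Set G) : S.closureOf X ⊆ S.atoms := Set.inter_subset_right

theorem subset_closureOf {X : Set G} (hX : X ⊆ S.atoms) : X ⊆ S.closureOf X :=
  fun x hx => ⟨⟨(hX hx).1, (S.deltaOf_spec hX).2.1 x hx⟩, hX hx⟩

theorem deltaOf_le_deltaOf {X Y : Set G} (hX : X ⊆ S.atoms) (hY : Y ⊆ S.atoms)
    (h : X ⊆ S.closureOf Y) : S.le (S.deltaOf X) (S.deltaOf Y) :=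
  (S.deltaOf_spec hX).2.2 _ (S.deltaOf_spec hY).1 fun _ hx => (h hx).1.2

theorem deltaOf_closureOf {X : Set G} (hX : X ⊆ S.atoms) :
    S.deltaOf (S.closureOf X) = S.deltaOf X :=
  S.le_antisymm (deltaOf_le_deltaOf (closureOf_subset_atoms X) hX subset_rfl)
    (deltaOf_le_deltaOf hX (closureOf_subset_atoms X)
      ((subset_closureOf hX).trans (subset_closureOf (closureOf_subset_atoms X))))

theorem closureOf_closureOf {X : Set G} (hX : X ⊆ S.atoms) :
    S.closureOf (S.closureOf X) = S.closureOf X := by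
  rw [closureOf, deltaOf_closureOf hX, closureOf]

theorem closureOf_mono {X Y : Set G} (hX : X ⊆ S.atoms) (hY : Y ⊆ S.atoms)
    (h : X ⊆ S.closureOf Y) : S.closureOf X ⊆ S.closureOf Y :=
  fun _ hx => ⟨⟨hx.1.1, S.le_trans hx.1.2 (deltaOf_le_deltaOf hX hY h)⟩, hx.2⟩

theorem GX_mono {X Y : Set G} (hX : X ⊆ S.atoms) (hY : Y ⊆ S.atoms)
    (h : X ⊆ S.closureOf Y) : S.GX X ≤ S.GX Y :=
  Subgroup.closure_mono (closureOf_mono hX hY h)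

namespace IsLCM

variable {X : Set G}

theorem deltaOf_mem_GX (h : S.IsLCM) (hX : X ⊆ S.atoms) : S.deltaOf X ∈ S.GX X := by
  have : S.deltaOf X ∈ S.Div (S.deltaOf X) :=
    ⟨(S.deltaOf_spec hX).1, by simp [le, S.pos.one_mem]⟩
  rw [h.div_eq X hX] at this
  exact this.2.1

theorem deltaOf_mem_Div_delta (h : S.IsLCM) (hX : X ⊆ S.atoms) :
    S.deltaOf X ∈ S.Div S.delta := by
  have : S.deltaOf X ∈ S.Div (S.deltaOf X) :=
    ⟨(S.deltaOf_spec hX).1, by simp [le, S.pos.one_mem]⟩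
  rw [h.div_eq X hX] at this
  exact this.1

theorem mem_closureOf_iff (h : S.IsLCM) (hX : X ⊆ S.atoms) {a : G} (ha : a ∈ S.atoms) :
    a ∈ S.closureOf X ↔ a ∈ S.GX X := by
  refine ⟨fun h' => Subgroup.subset_closure h', fun h' => ⟨?_, ha⟩⟩
  rw [h.div_eq X hX]
  exact ⟨S.atoms_subset_Div_delta ha, h', ha.1⟩

theorem GX_pos_induction (h : S.IsLCM) (hX : X ⊆ S.atoms) {p : G → Prop} (one : p 1)
    (mul : ∀ a ∈ S.closureOf X, ∀ g ∈ S.pos, g ∈ S.GX X → p g → p (a * g)) {g : G}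
    (hg : g ∈ S.pos) (hgX : g ∈ S.GX X) : p g := by
  refine S.pos_induction (p := fun g => g ∈ S.GX X → p g) (fun _ => one)
    (fun a ha g hg ih hag => ?_) hg hgX
  obtain ⟨h1, h2⟩ := h.factor_closed X hX _ hag (S.pos.mul_mem ha.1 hg) a g ha.1 hg rfl
  exact mul a ((h.mem_closureOf_iff hX ha).mpr h1) g hg h2 (ih h2)

theorem mem_of_prod_mem (h : S.IsLCM) (hX : X ⊆ S.atoms) {l : List G}
    (hl : ∀ a ∈ l, a ∈ S.atoms) (hprod : l.prod ∈ S.GX X) :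
    ∀ a ∈ l, a ∈ S.closureOf X := by
  induction l with
  | nil => simp
  | cons b l ih =>
    have hb := hl b (by simp)
    have hl' : ∀ a ∈ l, a ∈ S.atoms := fun a ha => hl a (by simp [ha])
    have hlp : l.prod ∈ S.pos := S.pos.list_prod_mem fun a ha => (hl' a ha).1
    rw [List.prod_cons] at hprod
    obtain ⟨h1, h2⟩ := h.factor_closed X hX _ hprod (S.pos.mul_mem hb.1 hlp) b _ hb.1 hlp rfl
    intro a ha
    rcases List.mem_cons.mp ha with rfl | ha
    · exact (h.mem_closureOf_iff hX hb).mpr h1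
    · exact ih hl' h2 a ha

theorem supp_spec (h : S.IsLCM) {y : G} (hy : y ∈ S.pos) :
    S.supp y ⊆ S.atoms ∧ S.closureOf (S.supp y) = S.supp y ∧ y ∈ S.GX (S.supp y) ∧
      ∀ X ⊆ S.atoms, y ∈ S.GX X → S.supp y ⊆ S.closureOf X := by
  have hex : ∃ p : List G × List G, (∀ a ∈ p.1, a ∈ S.atoms) ∧ (∀ a ∈ p.2, a ∈ S.atoms) ∧
      p.1.prod = S.DL y ∧ p.2.prod = S.NL y := by
    rw [← S.closure_atoms] at hy
    obtain ⟨l, hl, hprod⟩ := Submonoid.exists_list_of_mem_closure hy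
    rw [S.closure_atoms] at hy
    exact ⟨([], l), by simp, hl, by simp [S.DL_of_pos hy], by simp [S.NL_of_pos hy, hprod]⟩
  have e : S.supp y = S.closureOf ({a | a ∈ hex.choose.1} ∪ {a | a ∈ hex.choose.2}) :=
    dif_pos hex
  obtain ⟨h1, h2, h3, h4⟩ := hex.choose_spec
  generalize hex.choose = p at e h1 h2 h3 h4
  rw [S.DL_of_pos hy] at h3
  rw [S.NL_of_pos hy] at h4
  have hT : {a | a ∈ p.1} ∪ {a | a ∈ p.2} ⊆ S.atoms := Set.union_subset h1 h2
  rw [e]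
  refine ⟨closureOf_subset_atoms _, closureOf_closureOf hT, ?_, fun X hX hyX => ?_⟩
  · rw [GX, closureOf_closureOf hT, ← h4]
    exact Subgroup.list_prod_mem _ fun a ha =>
      Subgroup.subset_closure (subset_closureOf hT (Or.inr ha))
  · refine closureOf_mono hT hX (Set.union_subset ?_ ?_)
    · exact h.mem_of_prod_mem hX h1 (h3 ▸ one_mem _)
    · exact h.mem_of_prod_mem hX h2 (h4 ▸ hyX)

theorem GX_supp_le (h : S.IsLCM) (hX : X ⊆ S.atoms) {y : G} (hy : y ∈ S.pos)
    (hyX : y ∈ S.GX X) : S.GX (S.supp y) ≤ S.GX X :=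
  GX_mono (h.supp_spec hy).1 hX ((h.supp_spec hy).2.2.2 X hX hyX)

theorem conj_deltaOf_mem (h : S.IsLCM) (hX : X ⊆ S.atoms) {g : G} (hg : g ∈ S.pos)
    (hgX : g ∈ S.GX X) : S.deltaOf X * g * (S.deltaOf X)⁻¹ ∈ S.pos := by
  refine h.GX_pos_induction hX (p := fun g => S.deltaOf X * g * (S.deltaOf X)⁻¹ ∈ S.pos)
    (by simp [S.pos.one_mem]) (fun a ha g _ _ ih => ?_) hg hgX
  have h1 : S.deltaOf X * a⁻¹ ∈ S.pos := (h.balanced X hX a ha.1.1).mp ha.1.2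
  have h2 := (h.balanced X hX _ h1).mp (by simpa [le] using ha.1.1)
  simpa [mul_assoc] using S.pos.mul_mem h2 ih

theorem inv_conj_deltaOf_mem (h : S.IsLCM) (hX : X ⊆ S.atoms) {g : G} (hg : g ∈ S.pos)
    (hgX : g ∈ S.GX X) : (S.deltaOf X)⁻¹ * g * S.deltaOf X ∈ S.pos := by
  refine h.GX_pos_induction hX (p := fun g => (S.deltaOf X)⁻¹ * g * S.deltaOf X ∈ S.pos)
    (by simp [S.pos.one_mem]) (fun a ha g _ _ ih => ?_) hg hgX
  have h1 : a⁻¹ * S.deltaOf X ∈ S.pos := ha.1.2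
  have h2 := (h.balanced X hX _ h1).mpr (by simpa using ha.1.1)
  simpa [le, mul_assoc] using S.pos.mul_mem h2 ih

theorem conj_deltaOf_pow_mem (h : S.IsLCM) (hX : X ⊆ S.atoms) {g : G} (hg : g ∈ S.pos)
    (hgX : g ∈ S.GX X) (n : ℕ) : S.deltaOf X ^ n * g * (S.deltaOf X ^ n)⁻¹ ∈ S.pos := by
  induction n with
  | zero => simpa using hg
  | succ n ih =>
    have hd := pow_mem (h.deltaOf_mem_GX hX) n
    have := h.conj_deltaOf_mem hX ih (mul_mem (mul_mem hd hgX) (inv_mem hd))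
    rw [pow_succ']
    simpa [mul_assoc] using this

/-- In `G_X`, being bounded below by a power of `Δ` and by the same power of `Δ_X` agree. -/
theorem deltaOf_pow_mul_mem_of_le_one (h : S.IsLCM) (hX : X ⊆ S.atoms) (K : ℕ) :
    ∀ {g : G}, g ∈ S.GX X → g⁻¹ ∈ S.pos → S.BoundedBelow K g →
      S.deltaOf X ^ K * g ∈ S.pos := by
  induction K with
  | zero => intro g _ _ hK; simpa [BoundedBelow] using hK
  | succ K ih =>
    intro g hgX hg hK
    let r := S.join g S.delta⁻¹
    have hgr : g⁻¹ * r ∈ S.pos := S.le_join_left _ _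
    have hr1 : r⁻¹ ∈ S.pos := by
      simpa using S.join_le g S.delta⁻¹ 1 (by simpa using hg) (by simpa using S.delta_pos)
    have hrd : S.delta * r ∈ S.pos := by simpa using S.le_join_right g S.delta⁻¹
    have hrX : r⁻¹ ∈ S.GX X :=
      (h.factor_closed X hX g⁻¹ (inv_mem hgX) hg _ _ hgr hr1 (by simp)).2
    have hr2 : r⁻¹ ∈ S.Div (S.deltaOf X) := by
      rw [h.div_eq X hX]
      exact ⟨⟨hr1, (S.delta_balanced _ hr1).mpr (by simpa using hrd)⟩, hrX, hr1⟩
    have hr3 : S.deltaOf X * r ∈ S.pos := by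
      simpa using (h.balanced X hX _ hr1).mp hr2.2
    have hle : S.BoundedBelow K (r⁻¹ * g) := by
      unfold BoundedBelow
      rw [S.delta_pow_mul_mem_iff, mul_assoc]
      refine S.join_le g S.delta⁻¹ _ (by simpa using S.delta_pow_mem K) ?_
      unfold BoundedBelow at hK
      rw [pow_succ, mul_assoc, S.delta_pow_mul_mem_iff] at hK
      simpa [mul_assoc] using hK
    have h1 := ih (g := r⁻¹ * g) (mul_mem hrX hgX) (by simpa using hgr) hle
    have h2 := h.conj_deltaOf_pow_mem hX hr3
      (mul_mem (h.deltaOf_mem_GX hX) (by simpa using hrX)) K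
    have h3 := S.pos.mul_mem h2 h1
    rw [pow_succ]
    simpa [mul_assoc] using h3

theorem deltaOf_pow_mul_mem (h : S.IsLCM) (hX : X ⊆ S.atoms) {K : ℕ} {g : G}
    (hg : g ∈ S.GX X) (hK : S.BoundedBelow K g) : S.deltaOf X ^ K * g ∈ S.pos := by
  have h1 := h.deltaOf_pow_mul_mem_of_le_one hX K (g := (S.DL g)⁻¹)
    (inv_mem (h.fraction_closed X hX g hg).1) (by simpa using S.DL_mem_pos g)
    (S.boundedBelow_DL_inv hK)
  have := S.pos.mul_mem h1 (S.NL_mem_pos g)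
  simpa [NL, mul_assoc] using this

/-- A positive element of `G_X` of length at most `K` is a prefix of `Δ_X ^ K`. -/
theorem le_deltaOf_pow (h : S.IsLCM) (hX : X ⊆ S.atoms) {L : G → ℤ} (hL : S.IsLength L)
    {g : G} (hg : g ∈ S.pos) (hgX : g ∈ S.GX X) :
    ∀ K : ℕ, L g ≤ K → g⁻¹ * S.deltaOf X ^ K ∈ S.pos := by
  refine h.GX_pos_induction hX (p := fun g => ∀ K : ℕ, L g ≤ K → g⁻¹ * S.deltaOf X ^ K ∈ S.pos)
    (fun K _ => ?_) (fun a ha g hg hgX ih K hK => ?_) hg hgX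
  · simpa using S.pos.pow_mem (S.deltaOf_spec hX).1 K
  · rw [hL.map_mul, hL.map_atom a ha.2] at hK
    have := hL.nonneg hg
    obtain ⟨K, rfl⟩ := Nat.exists_eq_add_of_le' (show 1 ≤ K by omega)
    have h1 : ∀ n : ℕ, (S.deltaOf X ^ n)⁻¹ * (a⁻¹ * S.deltaOf X) * S.deltaOf X ^ n ∈ S.pos := by
      intro n
      have haX : a⁻¹ * S.deltaOf X ∈ S.GX X :=
        mul_mem (inv_mem (Subgroup.subset_closure ha)) (h.deltaOf_mem_GX hX)
      induction n with
      | zero => simpa [le] using ha.1.2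
      | succ n ih =>
        have hd := pow_mem (h.deltaOf_mem_GX hX) n
        have := h.inv_conj_deltaOf_mem hX ih (mul_mem (mul_mem (inv_mem hd) haX) hd)
        rw [pow_succ]
        simpa [mul_assoc] using this
    have h2 := S.pos.mul_mem (ih K (by push_cast at hK; omega)) (h1 K)
    rw [pow_succ']
    simpa [mul_assoc] using h2

theorem swap_mem (h : S.IsLCM) (hX : X ⊆ S.atoms) {x : G} (hx : x ∈ S.GX X) :
    S.swap x ∈ S.GX X :=
  mul_mem (h.fraction_closed X hX x hx).2 (inv_mem (h.fraction_closed X hX x hx).1)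

theorem iterate_swap_mem (h : S.IsLCM) (hX : X ⊆ S.atoms) {x : G} (hx : x ∈ S.GX X) (n : ℕ) :
    S.swap^[n] x ∈ S.GX X := by
  induction n with
  | zero => exact hx
  | succ n ih => rw [Function.iterate_succ_apply']; exact h.swap_mem hX ih

end IsLCM

end Parabolic

section Swap

/-- The positive element conjugating `x` to its `n`-th iterated swap. -/
def swapConj (x : G) : ℕ → G
  | 0 => 1
  | n + 1 => S.DL (S.swap^[n] x) * swapConj x n

theorem iterate_swap_eq (x : G) (n : ℕ) :
    S.swap^[n] x = S.swapConj x n * x * (S.swapConj x n)⁻¹ := by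
  induction n with
  | zero => simp [swapConj]
  | succ n ih =>
    rw [Function.iterate_succ_apply', swap, swapConj, mul_inv_rev]
    nth_rewrite 2 [ih]
    simp only [mul_assoc]

theorem swapConj_mem_pos (x : G) (n : ℕ) : S.swapConj x n ∈ S.pos := by
  induction n with
  | zero => exact S.pos.one_mem
  | succ n ih => exact S.pos.mul_mem (S.DL_mem_pos _) ih

theorem swapConj_add (x : G) (m n : ℕ) :
    S.swapConj x (m + n) = S.swapConj (S.swap^[n] x) m * S.swapConj x n := by
  induction m with
  | zero => simp [swapConj]
  | succ m ih =>
    rw [Nat.succ_add, swapConj, ih, swapConj, ← Function.iterate_add_apply, mul_assoc]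

theorem swapConj_mul {x : G} {m : ℕ} (hx : S.swap^[m] x = x) (k : ℕ) :
    S.swapConj x (k * m) = S.swapConj x m ^ k := by
  induction k with
  | zero => simp [swapConj]
  | succ k ih => rw [Nat.succ_mul, swapConj_add, hx, ih, pow_succ]

theorem swapConj_mul_mem_pos (x : G) {n : ℕ} (hn : 0 < n) : S.swapConj x n * x ∈ S.pos := by
  obtain ⟨n, rfl⟩ := Nat.exists_eq_add_of_le' hn
  have h1 : S.swapConj x 1 * x = S.NL x := by simp [swapConj, NL]
  rw [swapConj_add, mul_assoc, h1]
  exact S.pos.mul_mem (S.swapConj_mem_pos _ _) (S.NL_mem_pos x)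

theorem boundedBelow_swapConj_inv {p : ℕ} {x : G} (h : S.BoundedBelow p x) (n : ℕ) :
    S.BoundedBelow (n * p) (S.swapConj x n)⁻¹ := by
  induction n with
  | zero => simp [BoundedBelow, swapConj, S.pos.one_mem]
  | succ n ih =>
    rw [swapConj, mul_inv_rev, Nat.succ_mul]
    exact ih.mul (S.boundedBelow_DL_inv (S.boundedBelow_iterate_swap h n))

theorem transport_mem_pos {x y u : G} (hu : u ∈ S.pos) (h : x * u = u * y) :
    S.DL x * u * (S.DL y)⁻¹ ∈ S.pos := by
  have h1 := S.mul_meet (S.DL x * u) 1 y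
  have h2 : S.DL x * u * y = S.NL x * u := by rw [mul_assoc, ← h, NL, mul_assoc]
  rw [mul_one, h2] at h1
  rw [show (S.DL y)⁻¹ = S.meet 1 y by simp [DL], h1]
  exact S.meet_mem_pos (S.pos.mul_mem (S.DL_mem_pos x) hu) (S.pos.mul_mem (S.NL_mem_pos x) hu)

theorem iterate_transport_mem_pos {x y u : G} (hu : u ∈ S.pos) (h : x * u = u * y) (n : ℕ) :
    S.swapConj x n * u * (S.swapConj y n)⁻¹ ∈ S.pos := by
  induction n with
  | zero => simpa [swapConj] using hu
  | succ n ih =>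
    have := S.transport_mem_pos (x := S.swap^[n] x) (y := S.swap^[n] y) ih
      (by rw [iterate_swap_eq, iterate_swap_eq]; simp [mul_assoc, ← mul_assoc x u, h])
    simpa [swapConj, mul_assoc] using this

variable {S}

namespace IsLCM

variable {X : Set G}

theorem swapConj_mem (h : S.IsLCM) (hX : X ⊆ S.atoms) {x : G} (hx : x ∈ S.GX X) (n : ℕ) :
    S.swapConj x n ∈ S.GX X := by
  induction n with
  | zero => exact one_mem _
  | succ n ih => exact mul_mem (h.fraction_closed X hX _ (h.iterate_swap_mem hX hx n)).1 ih

end IsLCM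

namespace IsLength

variable {L : G → ℤ}

theorem exists_recurrent (hL : S.IsLength L) (x : G) : ∃ n, S.Recurrent (S.swap^[n] x) := by
  obtain ⟨p, hp⟩ := S.exists_boundedBelow x
  obtain ⟨q, hq⟩ := S.exists_boundedBelow x⁻¹
  have hfin := hL.finite_bounded p q
  obtain ⟨m, n, hmn, h⟩ := hfin.exists_lt_map_eq_of_forall_mem (f := fun n => S.swap^[n] x)
    fun n => And.intro (S.boundedBelow_iterate_swap hp n) (S.boundedBelow_iterate_swap_inv hq n)
  refine ⟨m, n - m, by omega, ?_⟩
  rw [← Function.iterate_add_apply, Nat.sub_add_cancel hmn.le]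
  exact h.symm

/-- A conjugator between recurrent elements intertwines common powers of the products of
their swap conjugators. -/
theorem exists_swapConj_intertwine (hL : S.IsLength L) {x y u : G} (hx : S.Recurrent x)
    (hy : S.Recurrent y) (h : x * u = u * y) :
    ∃ n, 0 < n ∧ S.swap^[n] x = x ∧ S.swapConj x n * u = u * S.swapConj y n := by
  obtain ⟨z, -, hz, hzu⟩ := S.exists_central_mul_mem_pos u
  have hv : x * (z * u) = z * u * y := by rw [← mul_assoc, ← hz, mul_assoc, h, mul_assoc]
  suffices ∃ n, 0 < n ∧ S.swap^[n] x = x ∧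
      S.swapConj x n * (z * u) = z * u * S.swapConj y n by
    obtain ⟨n, hn, hnx, e⟩ := this
    refine ⟨n, hn, hnx, ?_⟩
    rw [← mul_assoc, ← hz, mul_assoc, mul_assoc] at e
    exact mul_left_cancel e
  generalize z * u = v at hzu hv
  obtain ⟨c, -, hc, hcv⟩ := S.exists_central_mul_mem_pos v⁻¹
  obtain ⟨k, hk⟩ := S.exists_boundedBelow c⁻¹
  obtain ⟨m₁, hm₁, h₁⟩ := hx
  obtain ⟨m₂, hm₂, h₂⟩ := hy
  have hx' : S.swap^[m₁ * m₂] x = x := by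
    rw [Function.iterate_mul]; exact Function.iterate_fixed h₁ m₂
  have hy' : S.swap^[m₁ * m₂] y = y := by
    rw [mul_comm, Function.iterate_mul]; exact Function.iterate_fixed h₂ m₁
  have hm : 0 < m₁ * m₂ := Nat.mul_pos hm₁ hm₂
  generalize m₁ * m₂ = m at hx' hy' hm
  have hmem : ∀ n, S.swapConj x (n * m) * v * (S.swapConj y (n * m))⁻¹ ∈
      {g : G | S.BoundedBelow 0 g ∧ S.BoundedBelow k g⁻¹} := by
    intro n
    refine ⟨boundedBelow_of_pos (S.iterate_transport_mem_pos hzu hv _), ?_⟩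
    have h1 : y * (c * v⁻¹) = c * v⁻¹ * x := by
      rw [← mul_assoc, ← hc, mul_assoc, mul_assoc]
      congr 1
      rw [mul_inv_eq_iff_eq_mul, mul_assoc, hv, inv_mul_cancel_left]
    have h2 := hk.mul_pos (S.iterate_transport_mem_pos hcv h1 (n * m))
    have e : c⁻¹ * (S.swapConj y (n * m) * (c * v⁻¹) * (S.swapConj x (n * m))⁻¹) =
        (S.swapConj x (n * m) * v * (S.swapConj y (n * m))⁻¹)⁻¹ := by
      rw [← mul_assoc (S.swapConj y (n * m)), ← hc]; group
    rwa [e] at h2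
  obtain ⟨i, j, hij, e⟩ := (hL.finite_bounded 0 k).exists_lt_map_eq_of_forall_mem
    (f := fun n => S.swapConj x (n * m) * v * (S.swapConj y (n * m))⁻¹) hmem
  obtain ⟨d, rfl⟩ := Nat.exists_eq_add_of_le hij.le
  refine ⟨d * m, Nat.mul_pos (by omega) hm, ?_, ?_⟩
  · rw [mul_comm, Function.iterate_mul]; exact Function.iterate_fixed hx' d
  · simp only [S.swapConj_mul hx', S.swapConj_mul hy'] at e ⊢
    have e' := congrArg (fun g => (S.swapConj x m ^ i)⁻¹ * g * S.swapConj y m ^ i) e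
    simp only [pow_add, mul_inv_rev, mul_assoc, inv_mul_cancel_left, inv_mul_cancel,
      mul_one] at e'
    rw [← mul_assoc] at e'
    exact (eq_mul_inv_iff_mul_eq.mp e').symm

end IsLength

end Swap

section PositiveConjugates

theorem eq_one_of_meet_delta_eq_one {g : G} (hg : g ∈ S.pos) (h : S.meet g S.delta = 1) :
    g = 1 := by
  by_contra h1
  obtain ⟨a, ha, b, hb, rfl⟩ := S.exists_atom_mul hg h1
  have := S.le_meet (a * b) S.delta a (by simpa using hb) (S.atoms_subset_Div_delta ha).2
  rw [h, mul_one] at this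
  exact ha.2.1 (S.units_triv a ha.1 this)

/-- The map `g ↦ g ∧ y g` commutes with taking the maximal simple prefix. -/
theorem meet_mul_meet_delta {y : G} (hy : y ∈ S.pos) (g : G) :
    S.meet (S.meet g (y * g)) S.delta = S.meet (S.meet g S.delta) (y * S.meet g S.delta) := by
  have hyd : S.delta⁻¹ * (y * S.delta) ∈ S.pos := by
    rw [S.conj_delta]
    simpa [mul_assoc] using hy
  apply S.le_antisymm
  · have h1 := S.meet_le_left (S.meet g (y * g)) S.delta
    have h2 := S.meet_le_right (S.meet g (y * g)) S.delta
    refine S.le_meet _ _ _ (S.le_meet _ _ _ (S.le_trans h1 (S.meet_le_left _ _)) h2) ?_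
    rw [S.mul_meet]
    exact S.le_meet _ _ _ (S.le_trans h1 (S.meet_le_right _ _)) (S.le_trans h2 hyd)
  · have h1 := S.meet_le_left (S.meet g S.delta) (y * S.meet g S.delta)
    have h2 := S.meet_le_right (S.meet g S.delta) (y * S.meet g S.delta)
    refine S.le_meet _ _ _ (S.le_meet _ _ _ (S.le_trans h1 (S.meet_le_left _ _)) ?_)
      (S.le_trans h1 (S.meet_le_right _ _))
    rw [S.mul_meet] at h2 ⊢
    exact S.le_trans h2 (S.meet_le_left _ _)

namespace IsLength

variable {S}
variable {L : G → ℤ}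

theorem exists_iterate_swap_mem_pos_of_length_le (hL : S.IsLength L) (n : ℕ) :
    ∀ x b, b ∈ S.pos → b * x * b⁻¹ ∈ S.pos → L b ≤ n → ∃ k, S.swap^[k] x ∈ S.pos := by
  induction n with
  | zero =>
    intro x b hb hx hn
    have : b = 1 := by
      by_contra h1
      have := hL.pos_of_ne_one hb h1
      omega
    subst this
    exact ⟨0, by simpa using hx⟩
  | succ n ih =>
    intro x b hb hx hn
    by_cases h1 : S.DL x = 1
    · exact ⟨0, S.mem_pos_of_DL_eq_one h1⟩
    have hb' : b * (S.DL x)⁻¹ ∈ S.pos := by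
      have := S.le_meet 1 x b⁻¹ (by simpa using hb)
        (by simpa using S.pos.mul_mem hx hb)
      simpa [DL] using this
    obtain ⟨k, hk⟩ := ih (S.swap x) (b * (S.DL x)⁻¹) hb' (by simpa [swap, mul_assoc] using hx) (by
      have := hL.pos_of_ne_one (S.DL_mem_pos x) h1
      rw [hL.map_mul, hL.map_inv]
      push_cast at hn
      omega)
    exact ⟨k + 1, hk⟩

theorem exists_iterate_swap_mem_pos (hL : S.IsLength L) {x β : G}
    (h : β⁻¹ * x * β ∈ S.pos) : ∃ k, S.swap^[k] x ∈ S.pos := by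
  obtain ⟨z, -, hz, hzb⟩ := S.exists_central_mul_mem_pos β⁻¹
  refine hL.exists_iterate_swap_mem_pos_of_length_le (L (z * β⁻¹)).toNat x (z * β⁻¹) hzb ?_
    (Int.self_le_toNat _)
  have e : z * β⁻¹ * x * (z * β⁻¹)⁻¹ = z * (β⁻¹ * x * β) * z⁻¹ := by group
  rwa [e, hz, mul_inv_cancel_right]

/-- An element conjugate to a positive one becomes positive after `ℓ(Δ)` swaps. -/
theorem iterate_swap_length_delta_mem_pos (hL : S.IsLength L) {x β : G}
    (h : β⁻¹ * x * β ∈ S.pos) : S.swap^[(L S.delta).toNat] x ∈ S.pos := by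
  obtain ⟨n, hn⟩ := hL.exists_iterate_swap_mem_pos h
  set y := S.swap^[n] x with hy
  let φ : G → G := fun g => S.meet g (y * g)
  have hφ1 : φ 1 = 1 := S.meet_eq_left (by simpa using hn)
  have hγ : ∀ i, φ^[i] (S.swapConj x n) = S.swapConj x n * (S.swapConj x i)⁻¹ := by
    intro i
    induction i with
    | zero => simp [swapConj]
    | succ i ih =>
      rw [Function.iterate_succ_apply', ih, swapConj, mul_inv_rev, ← mul_assoc]
      have e := S.mul_meet (S.swapConj x n * (S.swapConj x i)⁻¹) 1 (S.swap^[i] x)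
      rw [show (S.DL (S.swap^[i] x))⁻¹ = S.meet 1 (S.swap^[i] x) by simp [DL], e, mul_one]
      change S.meet _ (y * _) = _
      congr 1
      rw [hy, S.iterate_swap_eq x n, S.iterate_swap_eq x i]
      group
  have hpos : ∀ g ∈ S.pos, ∀ i, φ^[i] g ∈ S.pos := by
    intro g hg i
    induction i with
    | zero => exact hg
    | succ i ih =>
      rw [Function.iterate_succ_apply']
      exact S.meet_mem_pos ih (S.pos.mul_mem hn ih)
  have hhead : ∀ g i, φ^[i] (S.meet g S.delta) = S.meet (φ^[i] g) S.delta := by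
    intro g i
    induction i with
    | zero => rfl
    | succ i ih =>
      rw [Function.iterate_succ_apply', ih, Function.iterate_succ_apply']
      exact (S.meet_mul_meet_delta hn _).symm
  have hA := S.swapConj_mem_pos x n
  let s := S.meet (S.swapConj x n) S.delta
  have hs : s ∈ S.pos := S.meet_mem_pos hA S.delta_pos
  have hsn : φ^[n] s = 1 := by
    rw [hhead, hγ, mul_inv_cancel]
    exact S.meet_eq_left (by simpa using S.delta_pos)
  have hdec : ∀ i : ℕ, φ^[i] s = 1 ∨ L (φ^[i] s) + i ≤ L S.delta := by
    intro i
    induction i with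
    | zero => exact Or.inr (by simpa using hL.le_of_le (S.meet_le_right _ _))
    | succ i ih =>
      rw [Function.iterate_succ_apply']
      rcases ih with ih | ih
      · exact Or.inl (by rw [ih, hφ1])
      · by_cases hfix : φ (φ^[i] s) = φ^[i] s
        · left
          rw [hfix, ← Function.iterate_fixed hfix n, ← Function.iterate_add_apply, add_comm,
            Function.iterate_add_apply, hsn]
          exact Function.iterate_fixed hφ1 i
        · right
          have : L (φ (φ^[i] s)) < L (φ^[i] s) := by
            by_contra hlt
            exact hfix (hL.eq_of_le (S.meet_le_left _ _) (not_lt.mp hlt))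
          push_cast
          omega
  have hγ1 : φ^[(L S.delta).toNat] (S.swapConj x n) = 1 := by
    refine S.eq_one_of_meet_delta_eq_one (hpos _ hA _) ?_
    rw [← hhead]
    rcases hdec (L S.delta).toNat with h1 | h1
    · exact h1
    · by_contra hne
      have := hL.pos_of_ne_one (hpos s hs _) hne
      have := hL.nonneg S.delta_pos
      omega
  rw [hγ, mul_inv_eq_one] at hγ1
  rw [S.iterate_swap_eq, ← hγ1, ← S.iterate_swap_eq]
  exact hn

end IsLength

end PositiveConjugates

section Intersection

variable {S}

theorem SupportPreserving.conj_mem (hsp : S.SupportPreserving) {y z α g : G} (hy : y ∈ S.pos)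
    (hz : z ∈ S.pos) (h : α⁻¹ * y * α = z) (hg : g ∈ S.GX (S.supp y)) :
    α⁻¹ * g * α ∈ S.GX (S.supp z) := by
  rw [← hsp y hy z hz α h]
  exact ⟨g, hg, by simp⟩

/-- An element of two parabolic subgroups lies in a parabolic subgroup contained in both. -/
theorem exists_parabolic_of_mem (hLCM : S.IsLCM) (hsp : S.SupportPreserving) {L : G → ℤ}
    (hL : S.IsLength L) {X₁ X₂ : Set G} (hX₁ : X₁ ⊆ S.atoms) (hX₂ : X₂ ⊆ S.atoms)
    {c₁ c₂ x : G} (hx₁ : c₁⁻¹ * x * c₁ ∈ S.GX X₁) (hx₂ : c₂⁻¹ * x * c₂ ∈ S.GX X₂) {K : ℕ}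
    (hK : S.BoundedBelow K (c₁⁻¹ * x * c₁)⁻¹) :
    ∃ (Y : Set G) (θ : G), Y ⊆ S.atoms ∧ S.closureOf Y = Y ∧ θ⁻¹ * x * θ ∈ S.GX Y ∧
      S.BoundedBelow K (θ⁻¹ * x * θ)⁻¹ ∧
      ∀ g ∈ S.GX Y, c₁⁻¹ * (θ * g * θ⁻¹) * c₁ ∈ S.GX X₁ ∧ c₂⁻¹ * (θ * g * θ⁻¹) * c₂ ∈ S.GX X₂ := by
  obtain ⟨n₁, hr₁⟩ := hL.exists_recurrent (c₁⁻¹ * x * c₁)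
  obtain ⟨n₂, hr₂⟩ := hL.exists_recurrent (c₂⁻¹ * x * c₂)
  have hA₁ := hLCM.swapConj_mem hX₁ hx₁ n₁
  have hA₂ := hLCM.swapConj_mem hX₂ hx₂ n₂
  have hy₁ := hLCM.iterate_swap_mem hX₁ hx₁ n₁
  have hy₂ := hLCM.iterate_swap_mem hX₂ hx₂ n₂
  have hK' := S.boundedBelow_iterate_swap_inv hK n₁
  have e₁ := S.iterate_swap_eq (c₁⁻¹ * x * c₁) n₁
  have e₂ := S.iterate_swap_eq (c₂⁻¹ * x * c₂) n₂
  generalize S.swap^[n₁] (c₁⁻¹ * x * c₁) = y₁ at *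
  generalize S.swap^[n₂] (c₂⁻¹ * x * c₂) = y₂ at *
  generalize S.swapConj (c₁⁻¹ * x * c₁) n₁ = A₁ at *
  generalize S.swapConj (c₂⁻¹ * x * c₂) n₂ = A₂ at *
  obtain ⟨u, hu⟩ : ∃ u, u = A₁ * c₁⁻¹ * c₂ * A₂⁻¹ := ⟨_, rfl⟩
  have hyu : y₁ * u = u * y₂ := by rw [e₁, e₂, hu]; group
  obtain ⟨n, hn, -, hD⟩ := hL.exists_swapConj_intertwine hr₁ hr₂ hyu
  have hD₁ := hLCM.swapConj_mem hX₁ hy₁ n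
  have hD₂ := hLCM.swapConj_mem hX₂ hy₂ n
  have hp₁ := S.swapConj_mem_pos y₁ n
  have hp₂ := S.swapConj_mem_pos y₂ n
  have hq₁ := S.swapConj_mul_mem_pos y₁ hn
  have hq₂ := S.swapConj_mul_mem_pos y₂ hn
  generalize S.swapConj y₁ n = D₁ at *
  generalize S.swapConj y₂ n = D₂ at *
  have hE := S.pos.mul_mem hp₁ hq₁
  have hF := S.pos.mul_mem hp₂ hq₂
  have hEF : u⁻¹ * (D₁ * (D₁ * y₁)) * u = D₂ * (D₂ * y₂) := by
    rw [mul_assoc, inv_mul_eq_iff_eq_mul]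
    simp only [mul_assoc, hyu]
    rw [← mul_assoc D₁ u, hD, mul_assoc, ← mul_assoc D₁ u, hD, mul_assoc]
  obtain ⟨hs₁, hs₂, hs₃, -⟩ := hLCM.supp_spec hE
  obtain ⟨h1, h2⟩ := hLCM.factor_closed _ hs₁ _ hs₃ hE _ _ hp₁ hq₁ rfl
  have hyθ : (c₁ * A₁⁻¹)⁻¹ * x * (c₁ * A₁⁻¹) = y₁ := by rw [e₁]; group
  refine ⟨S.supp (D₁ * (D₁ * y₁)), c₁ * A₁⁻¹, hs₁, hs₂, ?_, ?_, fun g hg => ⟨?_, ?_⟩⟩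
  · rw [hyθ]
    exact (Subgroup.mul_mem_cancel_left _ h1).mp h2
  · rwa [hyθ]
  · have := hLCM.GX_supp_le hX₁ hE (mul_mem hD₁ (mul_mem hD₁ hy₁)) hg
    have := mul_mem (mul_mem (inv_mem hA₁) this) hA₁
    convert this using 1
    group
  · have := hLCM.GX_supp_le hX₂ hF (mul_mem hD₂ (mul_mem hD₂ hy₂)) (hsp.conj_mem hE hF hEF hg)
    have := mul_mem (mul_mem (inv_mem hA₂) this) hA₂
    convert this using 1
    rw [hu]
    group

theorem boundedBelow_deltaOf_inv (hLCM : S.IsLCM) {Z : Set G} (hZ : Z ⊆ S.atoms) :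
    S.BoundedBelow 1 (S.deltaOf Z)⁻¹ := by
  obtain ⟨h1, h2⟩ := hLCM.deltaOf_mem_Div_delta hZ
  simpa [BoundedBelow] using (S.delta_balanced _ h1).mp h2

/-- A parabolic subgroup containing a power of `Δ_Z`, and whose Garside element is not longer
than `Δ_Z`, is contained in `G_Z`. -/
theorem conj_mem_of_deltaOf_pow_mem (hLCM : S.IsLCM) (hsp : S.SupportPreserving) {L : G → ℤ}
    (hL : S.IsLength L) {Z U : Set G} (hZ : Z ⊆ S.atoms) (hU : U ⊆ S.atoms) {α : G} {j : ℕ}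
    (hj : 0 < j) (hmem : α⁻¹ * S.deltaOf Z ^ j * α ∈ S.GX U)
    (hlen : L (S.deltaOf U) ≤ L (S.deltaOf Z)) {g : G} (hg : g ∈ S.GX U) :
    α * g * α⁻¹ ∈ S.GX Z := by
  have hd : S.deltaOf Z ^ j ∈ S.pos := S.pos.pow_mem (S.deltaOf_spec hZ).1 j
  have hv := hL.iterate_swap_length_delta_mem_pos (x := α⁻¹ * S.deltaOf Z ^ j * α) (β := α⁻¹)
    (by simpa [mul_assoc] using hd)
  have hvU := hLCM.iterate_swap_mem hU hmem (L S.delta).toNat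
  have hγ := hLCM.swapConj_mem hU hmem (L S.delta).toNat
  have e := S.iterate_swap_eq (α⁻¹ * S.deltaOf Z ^ j * α) (L S.delta).toNat
  generalize S.swap^[(L S.delta).toNat] (α⁻¹ * S.deltaOf Z ^ j * α) = v at *
  generalize S.swapConj (α⁻¹ * S.deltaOf Z ^ j * α) (L S.delta).toNat = γ at *
  obtain ⟨θ, hθ⟩ : ∃ θ, θ = α * γ⁻¹ := ⟨_, rfl⟩
  have hvθ : v = θ⁻¹ * S.deltaOf Z ^ j * θ := by rw [e, hθ]; group
  obtain ⟨hV, -, hvV, hVmin⟩ := hLCM.supp_spec hv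
  have hVU : S.le (S.deltaOf (S.supp v)) (S.deltaOf U) :=
    deltaOf_le_deltaOf hV hU (hVmin U hU hvU)
  obtain ⟨p, hp⟩ := S.exists_boundedBelow θ⁻¹
  obtain ⟨q, hq⟩ := S.exists_boundedBelow θ
  have hbound : ∀ i : ℕ, (i * j : ℤ) * L (S.deltaOf Z) ≤
      (p + i * j + q : ℤ) * L (S.deltaOf (S.supp v)) := by
    intro i
    have hb : S.BoundedBelow (p + i * j * 1 + q) (v ^ i)⁻¹ := by
      have := (hp.mul ((boundedBelow_deltaOf_inv hLCM hZ).pow (i * j))).mul hq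
      convert this using 1
      rw [hvθ, mul_comm i j, pow_mul, inv_pow]
      have := conj_pow (i := i) (a := θ⁻¹) (b := S.deltaOf Z ^ j)
      rw [inv_inv] at this
      rw [this, inv_pow]
      group
    have := hL.nonneg (hLCM.deltaOf_pow_mul_mem hV (inv_mem (pow_mem hvV i)) hb)
    rw [hL.map_mul, hL.map_inv, hL.map_pow, hL.map_pow, hvθ, hL.map_conj, hL.map_pow, ← hvθ] at this
    push_cast at this
    linarith
  have hle : L (S.deltaOf Z) ≤ L (S.deltaOf (S.supp v)) := by
    by_contra hlt
    have h0 := hL.nonneg (S.deltaOf_spec hV).1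
    have h1 := hbound (((p + q : ℤ) * L (S.deltaOf (S.supp v))).toNat + 1)
    have h2 := Int.self_le_toNat ((p + q : ℤ) * L (S.deltaOf (S.supp v)))
    push_cast at h1
    generalize (((p + q : ℤ) * L (S.deltaOf (S.supp v))).toNat : ℤ) = t at h1 h2
    have hj' : (1 : ℤ) ≤ j := by exact_mod_cast hj
    have h4 : 0 ≤ (p + q : ℤ) * L (S.deltaOf (S.supp v)) := by positivity
    have h3 : t + 1 ≤ (t + 1) * j := le_mul_of_one_le_right (by linarith) hj'
    have h5 : (1 : ℤ) ≤ L (S.deltaOf Z) - L (S.deltaOf (S.supp v)) := by omega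
    nlinarith [mul_le_mul h3 h5 (by norm_num) (by linarith)]
  have heq : S.deltaOf (S.supp v) = S.deltaOf U := hL.eq_of_le hVU (hlen.trans hle)
  have hGX : S.GX (S.supp v) = S.GX U := by rw [GX, GX, closureOf, closureOf, heq]
  have h1 : θ⁻¹⁻¹ * (γ * g * γ⁻¹) * θ⁻¹ ∈ S.GX (S.supp (S.deltaOf Z ^ j)) :=
    hsp.conj_mem hv hd (by rw [hvθ]; group)
      (hGX ▸ mul_mem (mul_mem hγ hg) (inv_mem hγ))
  have h2 := hLCM.GX_supp_le hZ hd (pow_mem (hLCM.deltaOf_mem_GX hZ) j) h1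
  convert h2 using 1
  rw [hθ]
  group

/-- A standard parabolic subgroup of maximal length inside an intersection of two parabolic
subgroups is the whole intersection. -/
theorem mem_GX_of_maximal (hLCM : S.IsLCM) (hsp : S.SupportPreserving) {L : G → ℤ}
    (hL : S.IsLength L) {X₁ X₂ Z : Set G} (hX₁ : X₁ ⊆ S.atoms) (hX₂ : X₂ ⊆ S.atoms)
    (hZ : Z ⊆ S.atoms) {c₁ c₂ : G}
    (hle : ∀ g ∈ S.GX Z, c₁⁻¹ * g * c₁ ∈ S.GX X₁ ∧ c₂⁻¹ * g * c₂ ∈ S.GX X₂)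
    (hmax : ∀ (Y : Set G) (θ : G), Y ⊆ S.atoms → S.closureOf Y = Y →
      (∀ g ∈ S.GX Y, c₁⁻¹ * (θ * g * θ⁻¹) * c₁ ∈ S.GX X₁ ∧
        c₂⁻¹ * (θ * g * θ⁻¹) * c₂ ∈ S.GX X₂) → L (S.deltaOf Y) ≤ L (S.deltaOf Z))
    {w : G} (hw₁ : c₁⁻¹ * w * c₁ ∈ S.GX X₁) (hw₂ : c₂⁻¹ * w * c₂ ∈ S.GX X₂) : w ∈ S.GX Z := by
  have hd := (S.deltaOf_spec hZ).1
  obtain ⟨p, hp⟩ := S.exists_boundedBelow w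
  obtain ⟨q₁, hq₁⟩ := S.exists_boundedBelow c₁⁻¹
  obtain ⟨q₂, hq₂⟩ := S.exists_boundedBelow (w⁻¹ * c₁)
  obtain ⟨C, hC⟩ : ∃ C : ℕ, ((q₁ + q₂ : ℕ) : ℤ) * L (S.deltaOf Z) - L w ≤ C :=
    ⟨_, Int.self_le_toNat _⟩
  have hx : ∀ m, c₁⁻¹ * (w * S.deltaOf Z ^ m) * c₁ ∈ S.GX X₁ ∧
      c₂⁻¹ * (w * S.deltaOf Z ^ m) * c₂ ∈ S.GX X₂ := by
    intro m
    obtain ⟨h1, h2⟩ := hle _ (pow_mem (hLCM.deltaOf_mem_GX hZ) m)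
    refine ⟨?_, ?_⟩
    · convert mul_mem hw₁ h1 using 1
      group
    · convert mul_mem hw₂ h2 using 1
      group
  -- For `m` large, `w * Δ_Z ^ m` is conjugate to a positive element, with a conjugator bounded
  -- independently of `m`.
  have key : ∀ m, C ≤ m → ∃ (U : Set G) (α : G), U ⊆ S.atoms ∧
      (S.BoundedBelow ((L S.delta).toNat * p) α ∧ S.BoundedBelow 0 α⁻¹) ∧
      α⁻¹ * (w * S.deltaOf Z ^ m) * α ∈ S.GX U ∧ L (S.deltaOf U) ≤ L (S.deltaOf Z) := by
    intro m hm
    have hb : S.BoundedBelow (q₁ + m * 1 + q₂) (c₁⁻¹ * (w * S.deltaOf Z ^ m) * c₁)⁻¹ := by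
      have := (hq₁.mul ((boundedBelow_deltaOf_inv hLCM hZ).pow m)).mul hq₂
      convert this using 1
      group
    obtain ⟨Y, θ, hY, hYsat, hyY, hyK, hYle⟩ :=
      exists_parabolic_of_mem hLCM hsp hL hX₁ hX₂ (hx m).1 (hx m).2 hb
    have hlen := hmax Y θ hY hYsat hYle
    have hypos : θ⁻¹ * (w * S.deltaOf Z ^ m) * θ ∈ S.pos := by
      have h1 := hLCM.deltaOf_pow_mul_mem hY (inv_mem hyY) hyK
      have h2 := hLCM.le_deltaOf_pow hY hL h1
        (mul_mem (pow_mem (hLCM.deltaOf_mem_GX hY) _) (inv_mem hyY)) (q₁ + m * 1 + q₂) (by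
          rw [hL.map_mul, hL.map_pow, hL.map_inv, hL.map_conj, hL.map_mul, hL.map_pow]
          push_cast at hC ⊢
          have : ((q₁ : ℤ) + m * 1 + q₂) * L (S.deltaOf Y) ≤
              ((q₁ : ℤ) + m * 1 + q₂) * L (S.deltaOf Z) :=
            mul_le_mul_of_nonneg_left hlen (by positivity)
          have : (C : ℤ) ≤ m := by exact_mod_cast hm
          linarith)
      simpa [mul_assoc] using h2
    have hu := hL.iterate_swap_length_delta_mem_pos hypos
    have e := S.iterate_swap_eq (w * S.deltaOf Z ^ m) (L S.delta).toNat
    have hα := S.swapConj_mem_pos (w * S.deltaOf Z ^ m) (L S.delta).toNat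
    have hα' := S.boundedBelow_swapConj_inv (hp.mul_pos (S.pos.pow_mem hd m)) (L S.delta).toNat
    generalize S.swap^[(L S.delta).toNat] (w * S.deltaOf Z ^ m) = u at *
    generalize S.swapConj (w * S.deltaOf Z ^ m) (L S.delta).toNat = a at *
    obtain ⟨hU, hUsat, huU, -⟩ := hLCM.supp_spec hu
    refine ⟨S.supp u, a⁻¹, hU, ⟨hα', by simpa using boundedBelow_of_pos hα⟩, ?_,
      hmax _ a⁻¹ hU hUsat fun g hg => ?_⟩
    · rwa [inv_inv, ← e]
    · have h1 := hsp.conj_mem hu hypos (α := a * θ) (by rw [e]; group) hg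
      have h2 := hYle _ (hLCM.GX_supp_le hY hypos hyY h1)
      have e2 : θ * ((a * θ)⁻¹ * g * (a * θ)) * θ⁻¹ = a⁻¹ * g * a⁻¹⁻¹ := by group
      rwa [e2] at h2
  choose! U α hU hα hmem hlen using key
  have hfin := S.atoms_finite.finite_subsets.prod (hL.finite_bounded ((L S.delta).toNat * p) 0)
  obtain ⟨m, n, hmn, heq⟩ := hfin.exists_lt_map_eq_of_forall_mem
    (f := fun k => (U (C + k), α (C + k)))
    fun k => Set.mk_mem_prod (hU _ (Nat.le_add_right C k)) (hα _ (Nat.le_add_right C k))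
  obtain ⟨hUeq, hαeq⟩ := Prod.mk.inj heq
  have hm := hmem _ (Nat.le_add_right C m)
  have hn := hmem _ (Nat.le_add_right C n)
  rw [← hUeq, ← hαeq] at hn
  have hpow : (α (C + m))⁻¹ * S.deltaOf Z ^ (n - m) * α (C + m) ∈ S.GX (U (C + m)) := by
    convert mul_mem (inv_mem hm) hn using 1
    rw [show C + n = C + m + (n - m) by omega, pow_add _ (C + m)]
    group
  have h1 := conj_mem_of_deltaOf_pow_mem hLCM hsp hL hZ (hU _ (Nat.le_add_right C m))
    (Nat.sub_pos_of_lt hmn) hpow (hlen _ (Nat.le_add_right C m)) hm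
  have h2 : w * S.deltaOf Z ^ (C + m) ∈ S.GX Z := by
    convert h1 using 1
    group
  exact (Subgroup.mul_mem_cancel_right _ (pow_mem (hLCM.deltaOf_mem_GX hZ) _)).mp h2

theorem mem_map_conj_iff {H : Subgroup G} {c g : G} :
    g ∈ Subgroup.map (MulAut.conj c).toMonoidHom H ↔ c⁻¹ * g * c ∈ H := by
  refine ⟨?_, fun h => ⟨_, h, by simp [mul_assoc]⟩⟩
  rintro ⟨x, hx, rfl⟩
  simpa [mul_assoc] using hx

end Intersection

end GarsideStructure

/-- under homogeneity, square-freeness and centrality of some positive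
power of each `Δ_X` in `G_X`, the intersection of two parabolic subgroups of a
support-preserving LCM-Garside structure is a parabolic subgroup. -/
theorem garside_intersection_of_parabolics {G : Type*} [Group G]
    (S : GarsideStructure G) (hLCM : S.IsLCM) (hsp : S.SupportPreserving)
    (hhom : ∃ ℓ : G → ℕ,
      (∀ a ∈ S.pos, ∀ b ∈ S.pos, ℓ (a * b) = ℓ a + ℓ b) ∧ ∀ a ∈ S.atoms, ℓ a = 1)
    (hsf : ∀ s ∈ S.Div S.delta, ∀ u ∈ S.pos, ∀ v ∈ S.pos, ∀ a ∈ S.atoms,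
      s ≠ u * a * a * v)
    (hcent : ∀ X : Set G, X ⊆ S.atoms → S.closureOf X = X →
      ∃ e : ℕ, 0 < e ∧ ∀ g ∈ S.GX X, Commute g (S.deltaOf X ^ e))
    (B₁ B₂ : Subgroup G) (h₁ : S.IsParabolic B₁) (h₂ : S.IsParabolic B₂) :
    S.IsParabolic (B₁ ⊓ B₂) := by
  obtain ⟨ℓ, hmul, hatom⟩ := hhom
  obtain ⟨L, hL⟩ := S.exists_isLength ℓ hmul hatom
  obtain ⟨_, c₁, ⟨X₁, hX₁, -, rfl⟩, rfl⟩ := h₁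
  obtain ⟨_, c₂, ⟨X₂, hX₂, -, rfl⟩, rfl⟩ := h₂
  let T : Set (Set G) := {Y | Y ⊆ S.atoms ∧ S.closureOf Y = Y ∧ ∃ θ : G, ∀ g ∈ S.GX Y,
    c₁⁻¹ * (θ * g * θ⁻¹) * c₁ ∈ S.GX X₁ ∧ c₂⁻¹ * (θ * g * θ⁻¹) * c₂ ∈ S.GX X₂}
  have hTfin : T.Finite := S.atoms_finite.finite_subsets.subset fun Y hY => hY.1
  have hTne : T.Nonempty := by
    obtain ⟨K, hK⟩ := S.exists_boundedBelow (c₁⁻¹ * 1 * c₁)⁻¹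
    obtain ⟨Y, θ, hY, hYsat, -, -, h⟩ :=
      GarsideStructure.exists_parabolic_of_mem hLCM hsp hL hX₁ hX₂ (c₂ := c₂)
        (by simp [one_mem]) (by simp [one_mem]) hK
    exact ⟨Y, hY, hYsat, θ, h⟩
  obtain ⟨Z, ⟨hZ, hZsat, θ, hθ⟩, hmax⟩ :=
    Set.exists_max_image T (fun Y => L (S.deltaOf Y)) hTfin hTne
  refine ⟨S.GX Z, θ, ⟨Z, hZ, hZsat, rfl⟩, ?_⟩
  have e : ∀ c g : G, (θ⁻¹ * c)⁻¹ * g * (θ⁻¹ * c) = c⁻¹ * (θ * g * θ⁻¹) * c := by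
    intro c g; group
  ext g
  simp only [Subgroup.mem_inf, GarsideStructure.mem_map_conj_iff]
  refine ⟨fun h => ?_, fun h => by simpa [mul_assoc] using hθ _ h⟩
  refine GarsideStructure.mem_GX_of_maximal hLCM hsp hL hX₁ hX₂ hZ (c₁ := θ⁻¹ * c₁)
    (c₂ := θ⁻¹ * c₂) (fun g hg => by simpa only [e] using hθ g hg) (fun Y η hY hYsat hη => ?_)
    (by simpa [mul_assoc] using h.1) (by simpa [mul_assoc] using h.2)
  refine hmax Y ⟨hY, hYsat, θ * η, fun g hg => ?_⟩
  have := hη g hg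
  simp only [e] at this
  simpa only [mul_assoc, mul_inv_rev] using this
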